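/- arXiv:math/0002095 — 3 statements merged into one kernel-verified Lean document; each statement's English description precedes it below -/
import Mathlib

section
/- Let N, k, d, f be integers with k ≥ N and d, f ≥ 1, and let g : ℤ → ℚ be a function with g(1+(k−N)d) = 0. Define (π_f g)(n) := Σ_{j=0}^{(k−N)f} g(n−j) − Σ_{j=0}^{(k−N)f} g(1+(k−N)(d+f)−j). Then (π_f g)(2+(k−N)(d+f)) = g(2+(k−N)(d+f)). -/
/-- The operator `π_f`: `(π_f g)(n) := Σ_{j=0}^{(k−N)f} g(n−j) − Σ_{j=0}^{(k−N)f} g(1+(k−N)(d+f)−j)`. -/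
def piOp (N k d f : ℤ) (g : ℤ → ℚ) (n : ℤ) : ℚ :=
  ∑ j ∈ Finset.range (((k - N) * f).toNat + 1), g (n - j) -
    ∑ j ∈ Finset.range (((k - N) * f).toNat + 1), g (1 + (k - N) * (d + f) - j)

theorem sum_range_add_one_sub_sub_sum_range_sub {R A : Type*} [AddGroupWithOne R] [AddCommGroup A]
    (g : R → A) (a : R) (m : ℕ) :
    ∑ j ∈ Finset.range m, g (a + 1 - j) - ∑ j ∈ Finset.range m, g (a - j) =
      g (a + 1) - g (a + 1 - m) := by
  have shift (j : ℕ) : a + 1 - ((j + 1 : ℕ) : R) = a - j := by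
    rw [Nat.cast_add_one, add_sub_add_right_eq_sub]
  simpa only [shift, Finset.sum_sub_distrib, Nat.cast_zero, sub_zero] using
    Finset.sum_range_sub' (fun j : ℕ => g (a + 1 - j)) m

theorem stmt3_general (N k d f : ℤ) (hkNf : 0 ≤ (k - N) * f) (g : ℤ → ℚ) :
    piOp N k d f g (2 + (k - N) * (d + f)) =
      g (2 + (k - N) * (d + f)) - g (1 + (k - N) * d) := by
  have evaluation_point : 2 + (k - N) * (d + f) = 1 + (k - N) * (d + f) + 1 := by ring
  have last_index :
      1 + (k - N) * (d + f) + 1 - ((((k - N) * f).toNat + 1 : ℕ) : ℤ) = 1 + (k - N) * d := by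
    rw [Nat.cast_add_one, Int.toNat_of_nonneg hkNf]
    ring
  rw [piOp, evaluation_point, sum_range_add_one_sub_sub_sum_range_sub, last_index]

/-- Proposition 2 (key identity): if `g(1+(k−N)d) = 0` then
`(π_f g)(2+(k−N)(d+f)) = g(2+(k−N)(d+f))`. -/
theorem stmt3 (N k d f : ℤ) (hkN : N ≤ k) (hd : 1 ≤ d) (hf : 1 ≤ f)
    (g : ℤ → ℚ) (hg : g (1 + (k - N) * d) = 0) :
    piOp N k d f g (2 + (k - N) * (d + f)) = g (2 + (k - N) * (d + f)) := by
  rw [stmt3_general N k d f (mul_nonneg (sub_nonneg.2 hkN) (zero_le_one.trans hf)), hg, sub_zero]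
end

section
/- Let N, k, d, f be integers with k ≥ N and d, f ≥ 1, and let g : ℤ → ℚ satisfy the symmetry g(n) = g(N−1+(k−N)d−n) for all n ∈ ℤ. Define (π_f g)(n) := Σ_{j=0}^{(k−N)f} g(n−j) − Σ_{j=0}^{(k−N)f} g(1+(k−N)(d+f)−j). Then (π_f g)(n) = (π_f g)(N−1+(k−N)(d+f)−n) for all n ∈ ℤ. -/
/- The reflection `y ↦ c - y` reverses the window of length `m + 1` ending at `x` onto the one
starting at `c - x`, which ends at `c + m - x`. -/
theorem sum_range_sub_eq_of_symm {R M : Type*} [AddCommGroupWithOne R] [AddCommMonoid M]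
    {g : R → M} {c : R} (hg : ∀ x, g x = g (c - x)) (m : ℕ) (x : R) :
    ∑ j ∈ Finset.range (m + 1), g (x - j) = ∑ j ∈ Finset.range (m + 1), g (c + m - x - j) := by
  rw [← Finset.sum_flip]
  refine Finset.sum_congr rfl fun j hj ↦ ?_
  have hjm : j ≤ m := Finset.mem_range_succ_iff.mp hj
  rw [hg, Nat.cast_sub hjm]
  congr 1
  abel

theorem stmt4_general (N k d f : ℤ) (hkf : 0 ≤ (k - N) * f)
    (g : ℤ → ℚ) (hsym : ∀ n : ℤ, g n = g (N - 1 + (k - N) * d - n)) (n : ℤ) :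
    piOp N k d f g n = piOp N k d f g (N - 1 + (k - N) * (d + f) - n) := by
  have hcenter : N - 1 + (k - N) * d + ((k - N) * f).toNat = N - 1 + (k - N) * (d + f) := by
    rw [Int.toNat_of_nonneg hkf]
    ring
  rw [piOp, piOp, sum_range_sub_eq_of_symm hsym, hcenter]

/-- Proposition 2 (symmetry, condition (ii)): if `g(n) = g(N−1+(k−N)d−n)` for all `n`, then
`(π_f g)(n) = (π_f g)(N−1+(k−N)(d+f)−n)` for all `n`. -/
theorem stmt4 (N k d f : ℤ) (hkN : N ≤ k) (hd : 1 ≤ d) (hf : 1 ≤ f)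
    (g : ℤ → ℚ) (hsym : ∀ n : ℤ, g n = g (N - 1 + (k - N) * d - n)) :
    ∀ n : ℤ, piOp N k d f g n = piOp N k d f g (N - 1 + (k - N) * (d + f) - n) :=
  stmt4_general N k d f (mul_nonneg (sub_nonneg.mpr hkN) (zero_le_one.trans hf)) g hsym
end

section
/- Let N, k, d, f be integers with k ≥ N and d, f ≥ 1, and let g : ℤ → ℚ satisfy the symmetry g(n) = g(N−1+(k−N)d−n) for all n ∈ ℤ. Define (π_f g)(n) := Σ_{j=0}^{(k−N)f} g(n−j) − Σ_{j=0}^{(k−N)f} g(1+(k−N)(d+f)−j). Then (π_f g)(1+(k−N)(d+f)) = 0 and (π_f g)(N−2) = 0. -/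
/- Summing over a window of `L + 1` consecutive integers turns a symmetry `n ↦ c - n` into the
symmetry `n ↦ c + L - n`. Subtracting a constant preserves it, so with `c = N - 1 + (k - N) d` and
`L = (k - N) f` the function `π_f g` is invariant under `n ↦ N - 1 + (k - N) (d + f) - n`. This
reflection exchanges the point `1 + (k - N) (d + f)`, where `π_f g` is normalized to vanish, with
`N - 2`. -/

theorem sum_range_sub_natCast_reflect {R M : Type*} [AddCommGroupWithOne R] [AddCommMonoid M]
    {g : R → M} {c : R} (hg : ∀ x, g x = g (c - x)) (L : ℕ) (x : R) :
    ∑ j ∈ Finset.range (L + 1), g (c + L - x - j) = ∑ j ∈ Finset.range (L + 1), g (x - j) := by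
  rw [← Finset.sum_flip fun j : ℕ => g (x - j)]
  refine Finset.sum_congr rfl fun j hj => ?_
  have hjL : j ≤ L := Finset.mem_range_succ_iff.mp hj
  calc g (c + L - x - j) = g (c - (c + L - x - j)) := hg _
    _ = g (x - (L - j : ℕ)) := by
      rw [Nat.cast_sub hjL]
      congr 1
      abel

theorem piOp_one_add_mul_add_eq_zero (N k d f : ℤ) (g : ℤ → ℚ) :
    piOp N k d f g (1 + (k - N) * (d + f)) = 0 :=
  sub_self _

theorem piOp_reflect {N k d f : ℤ} (hL : 0 ≤ (k - N) * f) {g : ℤ → ℚ}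
    (hsym : ∀ n : ℤ, g n = g (N - 1 + (k - N) * d - n)) (n : ℤ) :
    piOp N k d f g (N - 1 + (k - N) * (d + f) - n) = piOp N k d f g n := by
  have hcenter : N - 1 + (k - N) * (d + f) = N - 1 + (k - N) * d + ((k - N) * f).toNat := by
    rw [Int.toNat_of_nonneg hL]
    ring
  unfold piOp
  rw [hcenter, sum_range_sub_natCast_reflect hsym]

theorem stmt5_general (N k d f : ℤ) (hL : 0 ≤ (k - N) * f)
    (g : ℤ → ℚ) (hsym : ∀ n : ℤ, g n = g (N - 1 + (k - N) * d - n)) :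
    piOp N k d f g (1 + (k - N) * (d + f)) = 0 ∧ piOp N k d f g (N - 2) = 0 := by
  refine ⟨piOp_one_add_mul_add_eq_zero N k d f g, ?_⟩
  calc piOp N k d f g (N - 2)
      = piOp N k d f g (N - 1 + (k - N) * (d + f) - (1 + (k - N) * (d + f))) := by
        congr 1
        ring
    _ = piOp N k d f g (1 + (k - N) * (d + f)) := piOp_reflect hL hsym _
    _ = 0 := piOp_one_add_mul_add_eq_zero N k d f g

/-- Proposition 2 (flat metric, condition (i)): if `g(n) = g(N−1+(k−N)d−n)` for all `n`, then
`(π_f g)(1+(k−N)(d+f)) = 0` and `(π_f g)(N−2) = 0`. -/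
theorem stmt5 (N k d f : ℤ) (hkN : N ≤ k) (hd : 1 ≤ d) (hf : 1 ≤ f)
    (g : ℤ → ℚ) (hsym : ∀ n : ℤ, g n = g (N - 1 + (k - N) * d - n)) :
    piOp N k d f g (1 + (k - N) * (d + f)) = 0 ∧ piOp N k d f g (N - 2) = 0 :=
  stmt5_general N k d f (mul_nonneg (sub_nonneg.mpr hkN) (zero_le_one.trans hf)) g hsym
end
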